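/- Let F : ℂ → ℂ be entire with F real-valued on the real axis, let f be its restriction to ℝ with Taylor coefficients c_j = F^{(j)}(0)/j!, and let 0 < ω < a. Then ∫_0^a f(x)/(ω² + x²) dx = Σ_{k=0}^{∞} (-1)^k ω^{2k} ⨍_0^a f(x)/x^{2k+2} dx + (π/(2ω)) Re F(iω) − (ln ω/ω) Im F(iω), where the infinite series converges. -/

import Mathlib

open Filter MeasureTheory Set

/-! The finite part of `∫ x in 0..a, x ^ j / x ^ n` is the value at `a` of the primitive of
`x ^ (j - n)` without constant term (a logarithm if `j - n = -1`), and the finite parts of a power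
series are summed term by term. Since `∑ k, ∑ j, |c j| * a ^ j * (ω / a) ^ (2 * k)` converges for
`ω < a`, the series over `k` may be interchanged with the series over `j`, which reduces the claim
to `f x = x ^ j`. Both sides then satisfy the same recursion from `j` to `j + 2`, coming from
`x ^ (j + 2) = x ^ j * (ω ^ 2 + x ^ 2) - ω ^ 2 * x ^ j`, so that only `j = 0` and `j = 1` remain:
these are the expansions of `arctan (ω / a)` and `log (1 + (ω / a) ^ 2)`. -/

/-- The primitive of `x ^ m` on `(0, ∞)` without constant term. Its value at `a` is the finite part
of `∫ x in 0..a, x ^ m`. -/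
noncomputable def zpowPrimitive (m : ℤ) (x : ℝ) : ℝ :=
  if m = -1 then Real.log x else x ^ (m + 1) / (m + 1)

/-- `I` is the finite part of `∫ x in 0..a, f x / x ^ (n + 1)`, where `c` is the sequence of Taylor
coefficients of `f` at `0`. The exponent is `n + 1`, since exponents are at least `1`. -/
def HasFinitePart (c : ℕ → ℝ) (f : ℝ → ℝ) (n : ℕ) (a I : ℝ) : Prop :=
  Tendsto
    (fun ε : ℝ => (∫ x in ε..a, f x / x ^ (n + 1)) -
      ((∑ j ∈ Finset.range n, c j / (((n - j : ℕ) : ℝ) * ε ^ (n - j))) - c n * Real.log ε))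
    (nhdsWithin 0 (Ioi 0)) (nhds I)

/-- The contribution of the poles `± ω * I` of `F z / (ω ^ 2 + z ^ 2)`, as a function of
`F (ω * I)`. -/
noncomputable def poleTerm (ω : ℝ) : ℂ →L[ℝ] ℝ :=
  (Real.pi / (2 * ω)) • Complex.reCLM - (Real.log ω / ω) • Complex.imCLM

theorem poleTerm_apply (ω : ℝ) (z : ℂ) :
    poleTerm ω z = Real.pi / (2 * ω) * z.re - Real.log ω / ω * z.im :=
  rfl

theorem zpowPrimitive_neg_one (x : ℝ) : zpowPrimitive (-1) x = Real.log x :=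
  if_pos rfl

theorem zpowPrimitive_of_ne {m : ℤ} (hm : m ≠ -1) (x : ℝ) :
    zpowPrimitive m x = x ^ (m + 1) / (m + 1) :=
  if_neg hm

theorem zpowPrimitive_natCast (j : ℕ) (x : ℝ) :
    zpowPrimitive j x = x ^ (j + 1) / (j + 1) := by
  rw [zpowPrimitive_of_ne (by lia)]
  norm_cast

theorem zpowPrimitive_neg_natCast_add_two (n : ℕ) (x : ℝ) :
    zpowPrimitive (-(n + 2)) x = -(((n + 1) * x ^ (n + 1))⁻¹) := by
  have hexp : -((n : ℤ) + 2) + 1 = -((n + 1 : ℕ) : ℤ) := by push_cast; ring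
  have hcast : ((-((n : ℤ) + 2) : ℤ) : ℝ) + 1 = -(n + 1) := by push_cast; ring
  rw [zpowPrimitive_of_ne (by lia), hexp, hcast, zpow_neg, zpow_natCast, div_neg, mul_inv, mul_comm,
    div_eq_mul_inv]

theorem integral_zpow_eq_zpowPrimitive_sub (m : ℤ) {ε a : ℝ} (hε : 0 < ε) (ha : 0 < a) :
    ∫ x in ε..a, x ^ m = zpowPrimitive m a - zpowPrimitive m ε := by
  rcases eq_or_ne m (-1) with rfl | hm
  · simp only [zpow_neg_one, zpowPrimitive_neg_one, integral_inv_of_pos hε ha,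
      Real.log_div ha.ne' hε.ne']
  · rw [integral_zpow (Or.inr ⟨hm, notMem_uIcc_of_lt hε ha⟩), zpowPrimitive_of_ne hm,
      zpowPrimitive_of_ne hm, sub_div]

theorem abs_zpowPrimitive_le (m : ℤ) {x : ℝ} (hx : 0 < x) :
    |zpowPrimitive m x| ≤ (1 + |Real.log x|) * x ^ (m + 1) := by
  rcases eq_or_ne m (-1) with rfl | hm
  · simp [zpowPrimitive_neg_one]
  · have hone : (1 : ℝ) ≤ |(m : ℝ) + 1| := by
      exact_mod_cast Int.one_le_abs (z := m + 1) (by lia)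
    have hpow : 0 < x ^ (m + 1) := zpow_pos hx _
    rw [zpowPrimitive_of_ne hm, abs_div, abs_of_pos hpow]
    calc x ^ (m + 1) / |(m : ℝ) + 1| ≤ x ^ (m + 1) := div_le_self hpow.le hone
      _ ≤ (1 + |Real.log x|) * x ^ (m + 1) :=
        le_mul_of_one_le_left hpow.le (by linarith [abs_nonneg (Real.log x)])

theorem hasSum_rows_of_hasSum_columns {α β M : Type*} [AddCommMonoid M] [TopologicalSpace M]
    [ContinuousAdd M] [T3Space M] {u : α × β → M} {row : α → M} {col : β → M} {S : M}
    (hu : Summable u) (hrow : ∀ k, HasSum (fun j => u (k, j)) (row k))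
    (hcol : ∀ j, HasSum (fun k => u (k, j)) (col j)) (hS : HasSum col S) : HasSum row S := by
  have hswap : HasSum (fun p : β × α => u p.swap) (∑' p, u p) :=
    (Equiv.prodComm β α).hasSum_iff.mpr hu.hasSum
  exact (hswap.prod_fiberwise hcol).unique hS ▸ hu.hasSum.prod_fiberwise hrow

section PowerSeries

variable {c : ℕ → ℝ} {f : ℝ → ℝ} {a : ℝ}

theorem hasSum_integral_powerSeries_mul {w : ℝ → ℝ} {b : ℝ} (hb : 0 ≤ b) (hba : b ≤ a)
    (hf : ∀ x ∈ Icc b a, HasSum (fun j => c j * x ^ j) (f x))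
    (hw : IntervalIntegrable w volume b a) :
    HasSum (fun j => c j * ∫ x in b..a, x ^ j * w x) (∫ x in b..a, f x * w x) := by
  have hsum : Summable fun j => |c j * a ^ j| := (hf a (right_mem_Icc.mpr hba)).summable.abs
  have hbound : ∀ j, ∀ x ∈ Ioc b a, |c j * (x ^ j * w x)| ≤ |c j * a ^ j| * |w x| := by
    intro j x hx
    have hx0 : 0 ≤ x := hb.trans hx.1.le
    rw [← mul_assoc, abs_mul, abs_mul, abs_mul, abs_of_nonneg (pow_nonneg hx0 j),
      abs_of_nonneg (pow_nonneg (hx0.trans hx.2) j)]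
    gcongr
    exact hx.2
  simp_rw [← intervalIntegral.integral_const_mul]
  refine intervalIntegral.hasSum_integral_of_dominated_convergence
    (fun j x => |c j * a ^ j| * |w x|) (fun j => ?_) (fun j => ?_) ?_ ?_ ?_
  · have hpow : ContinuousOn (fun x : ℝ => x ^ j) (uIcc b a) := by fun_prop
    exact (intervalIntegrable_iff.mp ((hw.continuousOn_mul hpow).const_mul (c j))).1
  · rw [uIoc_of_le hba]
    exact Eventually.of_forall (hbound j)
  · exact Eventually.of_forall fun x _ => hsum.mul_right _
  · simp_rw [tsum_mul_right]
    exact hw.abs.const_mul _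
  · refine Eventually.of_forall fun x hx => ?_
    rw [uIoc_of_le hba] at hx
    simpa only [mul_assoc] using (hf x (Ioc_subset_Icc_self hx)).mul_right (w x)

theorem hasSum_integral_powerSeries_div_pow {b : ℝ} (hb : 0 < b) (hba : b ≤ a)
    (hf : ∀ x ∈ Icc b a, HasSum (fun j => c j * x ^ j) (f x)) (n : ℕ) :
    HasSum (fun j : ℕ => c j * (zpowPrimitive (j - n) a - zpowPrimitive (j - n) b))
      (∫ x in b..a, f x / x ^ n) := by
  have hpos : ∀ x ∈ uIcc b a, 0 < x := fun x hx => by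
    rw [uIcc_of_le hba] at hx
    exact hb.trans_le hx.1
  have hint : IntervalIntegrable (fun x : ℝ => (x ^ n)⁻¹) volume b a :=
    ContinuousOn.intervalIntegrable <|
      ContinuousOn.inv₀ (by fun_prop) fun x hx => (pow_pos (hpos x hx) n).ne'
  simp_rw [div_eq_mul_inv]
  refine (hasSum_integral_powerSeries_mul hb.le hba hf hint).congr_fun fun j => ?_
  rw [← integral_zpow_eq_zpowPrimitive_sub _ hb (hb.trans_le hba)]
  congr 1
  refine intervalIntegral.integral_congr fun x hx => ?_
  simp only [zpow_sub₀ (hpos x hx).ne', zpow_natCast, div_eq_mul_inv]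

theorem summable_mul_zpowPrimitive (ha : 0 < a) (hc : Summable fun j => c j * a ^ j) (m : ℤ) :
    Summable fun j : ℕ => c j * zpowPrimitive (j - m) a := by
  refine Summable.of_norm_bounded (hc.abs.mul_right ((1 + |Real.log a|) * a ^ (1 - m))) fun j => ?_
  rw [Real.norm_eq_abs, abs_mul, abs_mul, abs_of_pos (pow_pos ha j), mul_assoc]
  gcongr
  refine (abs_zpowPrimitive_le _ ha).trans_eq ?_
  rw [sub_add_eq_add_sub, add_sub_assoc, zpow_add₀ ha.ne', zpow_natCast]
  ring

theorem tendsto_tsum_mul_zpowPrimitive_zero (ha : 0 < a)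
    (hc : Summable fun j => c j * zpowPrimitive j a) :
    Tendsto (fun ε => ∑' j : ℕ, c j * zpowPrimitive j ε) (nhdsWithin 0 (Ioi 0)) (nhds 0) := by
  have hterm : ∀ j : ℕ, Tendsto (fun ε => c j * zpowPrimitive j ε) (nhdsWithin 0 (Ioi 0))
      (nhds 0) := fun j => by
    have hcont : Continuous fun ε : ℝ => c j * zpowPrimitive j ε := by
      simp only [zpowPrimitive_natCast]
      fun_prop
    simpa [zpowPrimitive_natCast] using hcont.continuousWithinAt.tendsto (x := (0 : ℝ))
  have hbound : ∀ᶠ ε in nhdsWithin 0 (Ioi 0), ∀ j : ℕ,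
      ‖c j * zpowPrimitive j ε‖ ≤ |c j * zpowPrimitive j a| := by
    filter_upwards [Ioo_mem_nhdsGT ha] with ε hε j
    have hε0 := hε.1.le
    simp only [zpowPrimitive_natCast, Real.norm_eq_abs, abs_mul]
    rw [abs_of_nonneg (a := ε ^ (j + 1) / _) (by positivity),
      abs_of_nonneg (a := a ^ (j + 1) / _) (by positivity)]
    gcongr
    exact hε.2.le
  simpa only [tsum_zero] using tendsto_tsum_of_dominated_convergence hc.abs hterm hbound

theorem sum_mul_zpowPrimitive (c : ℕ → ℝ) (n : ℕ) (ε : ℝ) :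
    ∑ j ∈ Finset.range (n + 1), c j * zpowPrimitive (j - (n + 1 : ℕ)) ε =
      -((∑ j ∈ Finset.range n, c j / (((n - j : ℕ) : ℝ) * ε ^ (n - j))) - c n * Real.log ε) := by
  rw [Finset.sum_range_succ, neg_sub, sub_eq_neg_add (c n * _), ← Finset.sum_neg_distrib]
  congr 1
  · refine Finset.sum_congr rfl fun j hj => ?_
    obtain ⟨i, rfl⟩ := Nat.exists_eq_add_of_lt (Finset.mem_range.mp hj)
    have hexp : (j : ℤ) - (j + i + 1 + 1 : ℕ) = -(i + 2) := by push_cast; ring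
    have hsub : j + i + 1 - j = i + 1 := by lia
    rw [hexp, zpowPrimitive_neg_natCast_add_two, hsub, mul_neg, div_eq_mul_inv]
    push_cast
    rfl
  · rw [show (n : ℤ) - (n + 1 : ℕ) = -1 by lia, zpowPrimitive_neg_one]

theorem hasFinitePart_tsum_mul_zpowPrimitive (ha : 0 < a)
    (hf : ∀ x ∈ Icc 0 a, HasSum (fun j => c j * x ^ j) (f x)) (n : ℕ) :
    HasFinitePart c f n a (∑' j : ℕ, c j * zpowPrimitive (j - (n + 1 : ℕ)) a) := by
  set P : ℕ → ℝ → ℝ := fun j x => c j * zpowPrimitive (j - (n + 1 : ℕ)) x with hP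
  have hsummable : Summable fun j => P j a :=
    summable_mul_zpowPrimitive ha (hf a (right_mem_Icc.mpr ha.le)).summable _
  have htail : ∀ j x, P (j + (n + 1)) x = c (j + (n + 1)) * zpowPrimitive j x := fun j x => by
    simp only [hP]
    rw [show ((j + (n + 1) : ℕ) : ℤ) - (n + 1 : ℕ) = j by lia]
  have htendsto : Tendsto (fun ε => ∑' j, P (j + (n + 1)) ε) (nhdsWithin 0 (Ioi 0)) (nhds 0) := by
    simp_rw [htail]
    refine tendsto_tsum_mul_zpowPrimitive_zero ha ?_
    simpa only [htail] using (summable_nat_add_iff (n + 1)).mpr hsummable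
  have hlim := htendsto.const_sub (∑' j, P j a)
  rw [sub_zero] at hlim
  refine hlim.congr' ?_
  filter_upwards [Ioo_mem_nhdsGT ha] with ε hε
  have hint : HasSum (fun j => P j a - P j ε) (∫ x in ε..a, f x / x ^ (n + 1)) := by
    simpa only [mul_sub] using hasSum_integral_powerSeries_div_pow hε.1 hε.2.le
      (fun x hx => hf x ⟨hε.1.le.trans hx.1, hx.2⟩) (n + 1)
  have hsummable_ε : Summable fun j => P j ε := by
    simpa only [sub_sub_cancel] using hsummable.sub hint.summable
  rw [← hint.tsum_eq, hsummable.tsum_sub hsummable_ε, ← hsummable_ε.sum_add_tsum_nat_add (n + 1),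
    sum_mul_zpowPrimitive]
  ring

end PowerSeries

section Monomial

variable {ω a : ℝ}

theorem integral_pow_add_two_div_sq_add_sq (hω : ω ≠ 0) (j : ℕ) (a : ℝ) :
    ∫ x in 0..a, x ^ (j + 2) / (ω ^ 2 + x ^ 2) =
      a ^ (j + 1) / (j + 1) - ω ^ 2 * ∫ x in 0..a, x ^ j / (ω ^ 2 + x ^ 2) := by
  have hne : ∀ x : ℝ, ω ^ 2 + x ^ 2 ≠ 0 := fun x => by positivity
  have hint : IntervalIntegrable (fun x : ℝ => x ^ j / (ω ^ 2 + x ^ 2)) volume 0 a :=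
    Continuous.intervalIntegrable (by fun_prop (disch := exact hne _)) _ _
  have hpow : ∫ x in 0..a, x ^ j = a ^ (j + 1) / (j + 1) := by simp [integral_pow]
  rw [← hpow, ← intervalIntegral.integral_const_mul, ← intervalIntegral.integral_sub
    (Continuous.intervalIntegrable (by fun_prop) _ _) (hint.const_mul _)]
  refine intervalIntegral.integral_congr fun x _ => ?_
  have := hne x
  field_simp
  ring

theorem integral_self_div_sq_add_sq (hω : ω ≠ 0) (a : ℝ) :
    ∫ x in 0..a, x / (ω ^ 2 + x ^ 2) = Real.log (ω ^ 2 + a ^ 2) / 2 - Real.log ω := by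
  have hne : ∀ x : ℝ, ω ^ 2 + x ^ 2 ≠ 0 := fun x => by positivity
  have hderiv : ∀ x ∈ uIcc 0 a,
      HasDerivAt (fun x => Real.log (ω ^ 2 + x ^ 2) / 2) (x / (ω ^ 2 + x ^ 2)) x := fun x _ => by
    refine ((((hasDerivAt_pow 2 x).const_add (ω ^ 2)).log (hne x)).div_const 2).congr_deriv ?_
    have := hne x
    field_simp
    norm_num
    ring
  rw [intervalIntegral.integral_eq_sub_of_hasDerivAt hderiv
    (Continuous.intervalIntegrable (by fun_prop (disch := exact hne _)) _ _)]
  simp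

theorem hasSum_mul_zpowPrimitive_zero (hω : ω ≠ 0) (ha : |ω| < a) :
    HasSum (fun k : ℕ => (-1 : ℝ) ^ k * ω ^ (2 * k) * zpowPrimitive (-(2 * k + 2 : ℕ)) a)
      (-(ω⁻¹ * Real.arctan (ω / a))) := by
  have ha0 : 0 < a := (abs_nonneg ω).trans_lt ha
  have hlt : ‖ω / a‖ < 1 := by
    rwa [Real.norm_eq_abs, abs_div, abs_of_pos ha0, div_lt_one ha0]
  rw [← neg_mul]
  refine ((Real.hasSum_arctan hlt).mul_left (-ω⁻¹)).congr_fun fun k => ?_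
  have hterm := zpowPrimitive_neg_natCast_add_two (2 * k) a
  push_cast at hterm ⊢
  rw [hterm, div_pow]
  field_simp
  ring

theorem hasSum_mul_zpowPrimitive_one (ha : |ω| < a) :
    HasSum (fun k : ℕ => (-1 : ℝ) ^ k * ω ^ (2 * k) * zpowPrimitive (1 - (2 * k + 2 : ℕ)) a)
      (Real.log (ω ^ 2 + a ^ 2) / 2) := by
  have ha0 : 0 < a := (abs_nonneg ω).trans_lt ha
  have hlt : |-(ω / a) ^ 2| < 1 := by
    rw [abs_neg, abs_pow, abs_div, abs_of_pos ha0]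
    exact pow_lt_one₀ (by positivity) ((div_lt_one ha0).mpr ha) two_ne_zero
  have hlog : Real.log (1 - -(ω / a) ^ 2) = Real.log (ω ^ 2 + a ^ 2) - 2 * Real.log a := by
    rw [show 1 - -(ω / a) ^ 2 = (ω ^ 2 + a ^ 2) / a ^ 2 by field_simp; ring,
      Real.log_div (by positivity) (by positivity), Real.log_pow]
    norm_num
  have hseries := (Real.hasSum_pow_div_log_of_abs_lt_one hlt).mul_left (-2⁻¹)
  rw [← hasSum_nat_add_iff' 1]
  convert hseries using 1
  · rfl
  · funext k
    have hterm := zpowPrimitive_neg_natCast_add_two (2 * k + 1) a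
    rw [show -(((2 * k + 1 : ℕ) : ℤ) + 2) = 1 - (2 * (k + 1) + 2 : ℕ) by lia] at hterm
    rw [hterm, neg_pow ((ω / a) ^ 2), ← pow_mul, div_pow]
    push_cast
    field_simp
    ring
  · rw [hlog]
    have hlead : zpowPrimitive (1 - (2 * 0 + 2 : ℕ)) a = Real.log a := zpowPrimitive_neg_one a
    rw [Finset.sum_range_one, hlead]
    ring

theorem hasSum_mul_zpowPrimitive_add_two {j : ℕ} {S : ℝ}
    (h : HasSum (fun k : ℕ => (-1 : ℝ) ^ k * ω ^ (2 * k) * zpowPrimitive (j - (2 * k + 2 : ℕ)) a)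
      S) :
    HasSum (fun k : ℕ => (-1 : ℝ) ^ k * ω ^ (2 * k) *
        zpowPrimitive ((j + 2 : ℕ) - (2 * k + 2 : ℕ)) a)
      (a ^ (j + 1) / (j + 1) - ω ^ 2 * S) := by
  rw [← hasSum_nat_add_iff' 1]
  convert h.mul_left (-ω ^ 2) using 1
  · rfl
  · funext k
    rw [show ((j + 2 : ℕ) : ℤ) - (2 * (k + 1) + 2 : ℕ) = j - (2 * k + 2 : ℕ) by lia]
    ring
  · simp [zpowPrimitive_natCast]

theorem hasSum_mul_zpowPrimitive (hω : 0 < ω) (ha : ω < a) (j : ℕ) :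
    HasSum (fun k : ℕ => (-1 : ℝ) ^ k * ω ^ (2 * k) * zpowPrimitive (j - (2 * k + 2 : ℕ)) a)
      ((∫ x in 0..a, x ^ j / (ω ^ 2 + x ^ 2)) - poleTerm ω ((ω * Complex.I) ^ j)) := by
  have hω_abs : |ω| < a := by rwa [abs_of_pos hω]
  induction j using Nat.twoStepInduction with
  | zero =>
    have harctan : Real.arctan (a / ω) = Real.pi / 2 - Real.arctan (ω / a) := by
      rw [← inv_div ω a, Real.arctan_inv_of_pos (div_pos hω (hω.trans ha))]
    convert hasSum_mul_zpowPrimitive_zero hω.ne' hω_abs using 1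
    · simp
    · simp only [pow_zero, one_div, integral_inv_sq_add_sq hω.ne', harctan, zero_div,
        Real.arctan_zero, poleTerm_apply, Complex.one_re, Complex.one_im]
      field_simp
      ring
  | one =>
    convert hasSum_mul_zpowPrimitive_one hω_abs using 1
    · simp
    · simp only [pow_one, integral_self_div_sq_add_sq hω.ne', poleTerm_apply,
        Complex.re_ofReal_mul, Complex.im_ofReal_mul, Complex.I_re, Complex.I_im]
      field_simp
      ring
  | more j ih _ =>
    have hsq : ((ω : ℂ) * Complex.I) ^ (j + 2) = (-ω ^ 2 : ℝ) • ((ω : ℂ) * Complex.I) ^ j := by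
      rw [pow_add, mul_pow _ _ 2, Complex.I_sq, Complex.real_smul]
      push_cast
      ring
    convert hasSum_mul_zpowPrimitive_add_two ih using 1
    rw [integral_pow_add_two_div_sq_add_sq hω.ne', hsq, map_smul, smul_eq_mul]
    ring

end Monomial

theorem summable_prod_mul_zpowPrimitive {c : ℕ → ℝ} {ω a : ℝ} (hω : |ω| < a)
    (hc : Summable fun j => c j * a ^ j) :
    Summable fun p : ℕ × ℕ =>
      c p.2 * ((-1 : ℝ) ^ p.1 * ω ^ (2 * p.1) * zpowPrimitive (p.2 - (2 * p.1 + 2 : ℕ)) a) := by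
  have ha : 0 < a := (abs_nonneg ω).trans_lt hω
  have hgeom : Summable fun k : ℕ => ((|ω| / a) ^ 2) ^ k :=
    summable_geometric_of_lt_one (by positivity)
      (pow_lt_one₀ (by positivity) ((div_lt_one ha).mpr hω) two_ne_zero)
  refine Summable.of_norm_bounded ((hgeom.mul_of_nonneg hc.abs (fun k => by positivity)
    fun j => abs_nonneg _).mul_left ((1 + |Real.log a|) / a)) ?_
  rintro ⟨k, j⟩
  have hexp : (j : ℤ) - (2 * k + 2 : ℕ) + 1 = j - (2 * k + 1 : ℕ) := by lia
  have hbound := abs_zpowPrimitive_le (j - (2 * k + 2 : ℕ)) ha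
  rw [hexp, zpow_sub₀ ha.ne', zpow_natCast, zpow_natCast] at hbound
  simp only [Real.norm_eq_abs, abs_mul, abs_pow, abs_neg, abs_one, one_pow, one_mul, abs_of_pos ha]
  calc |c j| * (|ω| ^ (2 * k) * |zpowPrimitive (j - (2 * k + 2 : ℕ)) a|)
      ≤ |c j| * (|ω| ^ (2 * k) * ((1 + |Real.log a|) * (a ^ j / a ^ (2 * k + 1)))) := by gcongr
    _ = (1 + |Real.log a|) / a * (((|ω| / a) ^ 2) ^ k * (|c j| * a ^ j)) := by
      rw [← pow_mul, div_pow, pow_succ a (2 * k)]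
      field_simp

theorem hasSum_tsum_mul_zpowPrimitive {c : ℕ → ℝ} {f : ℝ → ℝ} {ω a : ℝ} {w : ℂ} (hω : 0 < ω)
    (ha : ω < a) (hf : ∀ x ∈ Icc 0 a, HasSum (fun j => c j * x ^ j) (f x))
    (hw : HasSum (fun j => c j • (ω * Complex.I) ^ j) w) :
    HasSum (fun k : ℕ => (-1 : ℝ) ^ k * ω ^ (2 * k) *
        ∑' j : ℕ, c j * zpowPrimitive (j - (2 * k + 2 : ℕ)) a)
      ((∫ x in 0..a, f x / (ω ^ 2 + x ^ 2)) - poleTerm ω w) := by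
  have ha0 : 0 < a := hω.trans ha
  have hfa : Summable fun j => c j * a ^ j := (hf a (right_mem_Icc.mpr ha0.le)).summable
  have hweight : IntervalIntegrable (fun x : ℝ => (ω ^ 2 + x ^ 2)⁻¹) volume 0 a :=
    Continuous.intervalIntegrable (by fun_prop (disch := intro x; positivity)) _ _
  have hintegral : HasSum (fun j => c j * ∫ x in 0..a, x ^ j / (ω ^ 2 + x ^ 2))
      (∫ x in 0..a, f x / (ω ^ 2 + x ^ 2)) := by
    simpa only [div_eq_mul_inv] using hasSum_integral_powerSeries_mul le_rfl ha0.le hf hweight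
  have hpole : HasSum (fun j => c j * poleTerm ω ((ω * Complex.I) ^ j)) (poleTerm ω w) := by
    simpa only [map_smul, smul_eq_mul] using (poleTerm ω).hasSum hw
  refine hasSum_rows_of_hasSum_columns
    (summable_prod_mul_zpowPrimitive (by rwa [abs_of_pos hω]) hfa) (fun k => ?_)
    (fun j => (hasSum_mul_zpowPrimitive hω ha j).mul_left (c j)) ?_
  · simpa only [mul_left_comm] using
      (summable_mul_zpowPrimitive ha0 hfa (2 * k + 2 : ℕ)).hasSum.mul_left
        ((-1 : ℝ) ^ k * ω ^ (2 * k))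
  · simpa only [mul_sub] using hintegral.sub hpole

theorem hasSum_iteratedDeriv_div_factorial_mul_pow {F : ℂ → ℂ} (hF : Differentiable ℂ F) (z : ℂ) :
    HasSum (fun j : ℕ => iteratedDeriv j F 0 / (Nat.factorial j) * z ^ j) (F z) := by
  refine (Complex.hasSum_taylorSeries_of_entire hF 0 z).congr_fun fun j => ?_
  rw [sub_zero, smul_eq_mul, smul_eq_mul]
  ring

theorem stmt_12_general {F : ℂ → ℂ} {f : ℝ → ℝ} {c : ℕ → ℝ} {ω a : ℝ} (hω : 0 < ω) (ha : ω < a)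
    (hF : ∀ z : ℂ, ‖z‖ ≤ a → HasSum (fun j => (c j : ℂ) * z ^ j) (F z))
    (hf : ∀ x ∈ Icc 0 a, f x = (F x).re) :
    ∃ fp : ℕ → ℝ, (∀ k, HasFinitePart c f (2 * k + 1) a (fp k)) ∧
      HasSum (fun k : ℕ => (-1 : ℝ) ^ k * ω ^ (2 * k) * fp k)
        ((∫ x in (0 : ℝ)..a, f x / (ω ^ 2 + x ^ 2)) -
          ((Real.pi / (2 * ω)) * (F ((ω : ℂ) * Complex.I)).re -
            (Real.log ω / ω) * (F ((ω : ℂ) * Complex.I)).im)) := by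
  have hfsum : ∀ x ∈ Icc 0 a, HasSum (fun j => c j * x ^ j) (f x) := fun x hx => by
    rw [hf x hx]
    have hnorm : ‖(x : ℂ)‖ ≤ a := by simpa [abs_of_nonneg hx.1] using hx.2
    simpa [← Complex.ofReal_pow, ← Complex.ofReal_mul] using Complex.hasSum_re (hF x hnorm)
  have hpole : ‖(ω : ℂ) * Complex.I‖ ≤ a := by simpa [abs_of_pos hω] using ha.le
  exact ⟨_, fun k => hasFinitePart_tsum_mul_zpowPrimitive (hω.trans ha) hfsum (2 * k + 1),
    hasSum_tsum_mul_zpowPrimitive hω ha hfsum (hF _ hpole)⟩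

/-- Finite-part integration of `∫_0^a f(x)/(ω²+x²) dx` for an entire `F` real on the
real axis: it equals `Σ_k (-1)^k ω^{2k} ⨍_0^a f/x^{2k+2} + (π/2ω) Re F(iω)
− (ln ω/ω) Im F(iω)`, the series converging. -/
theorem stmt_12 (F : ℂ → ℂ) (hF : Differentiable ℂ F)
    (hreal : ∀ x : ℝ, (F x).im = 0)
    (f : ℝ → ℝ) (hf : ∀ x : ℝ, f x = (F x).re)
    (c : ℕ → ℝ) (hc : ∀ j, (c j : ℂ) = iteratedDeriv j F 0 / (Nat.factorial j))
    (ω a : ℝ) (hω : 0 < ω) (ha : ω < a) :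
    ∃ fp : ℕ → ℝ, ∃ S : ℝ,
      (∀ k : ℕ,
        Tendsto
          (fun ε : ℝ =>
            (∫ x in ε..a, f x / x ^ (2 * k + 2)) -
              ((∑ j ∈ Finset.range (2 * k + 1),
                  c j / (((2 * k + 1 - j : ℕ) : ℝ) * ε ^ (2 * k + 1 - j))) -
                c (2 * k + 1) * Real.log ε))
          (nhdsWithin 0 (Set.Ioi 0)) (nhds (fp k))) ∧
      HasSum (fun k : ℕ => (-1 : ℝ) ^ k * ω ^ (2 * k) * fp k) S ∧
      (∫ x in (0 : ℝ)..a, f x / (ω ^ 2 + x ^ 2)) =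
        S + (Real.pi / (2 * ω)) * (F ((ω : ℂ) * Complex.I)).re -
          (Real.log ω / ω) * (F ((ω : ℂ) * Complex.I)).im := by
  have hF_sum (z : ℂ) : HasSum (fun j => (c j : ℂ) * z ^ j) (F z) := by
    simpa only [hc] using hasSum_iteratedDeriv_div_factorial_mul_pow hF z
  obtain ⟨fp, hfp, hsum⟩ := stmt_12_general hω ha (fun z _ => hF_sum z) (fun x _ => hf x)
  exact ⟨fp, _, hfp, hsum, by ring⟩
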